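/- A finite connected simple graph G is a convex geometry with respect to the strong convexity if and only if G is strongly chordal. -/

import Mathlib

open SimpleGraph

variable {V : Type*} {W : Type*}

/-- The convex hull of `S`: the smallest convex set containing `S`. -/
def chull (Cvx : Set V → Prop) (S : Set V) : Set V := ⋂₀ {T | S ⊆ T ∧ Cvx T}

/-- The set of extreme vertices of `S`. -/
def extremeSet (Cvx : Set V → Prop) (S : Set V) : Set V := {x | x ∈ S ∧ Cvx (S \ {x})}

/-- A convexity is a convex geometry if every convex set is the convex hull
of its extreme vertices. -/
def IsConvexGeometry (Cvx : Set V → Prop) : Prop :=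
  ∀ S : Set V, Cvx S → S = chull Cvx (extremeSet Cvx S)

/-- Convexity induced by a system of p-walks: `S` is convex iff every vertex
lying on a p-walk between two vertices of `S` belongs to `S`. -/
def PConvex (G : SimpleGraph V) (P : ∀ ⦃u v : V⦄, G.Walk u v → Prop) (S : Set V) : Prop :=
  ∀ ⦃u v : V⦄, u ∈ S → v ∈ S → ∀ w : G.Walk u v, P w → ∀ x ∈ w.support, x ∈ S

/-- `x` and `y` appear consecutively (in either order) in the list `l`. -/
def consecIn (l : List V) (x y : V) : Prop := [x, y] <:+: l ∨ [y, x] <:+: l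

/-- An induced path: a path such that the only edges of `G` between its vertices
are the consecutive ones. -/
def IsInducedPathW (G : SimpleGraph V) {u v : V} (w : G.Walk u v) : Prop :=
  w.IsPath ∧ ∀ x ∈ w.support, ∀ y ∈ w.support, G.Adj x y → consecIn w.support x y

/-- An induced cycle: a cycle such that the only edges of `G` between its vertices
are the consecutive (cyclically) ones. -/
def IsInducedCycleW (G : SimpleGraph V) {u : V} (w : G.Walk u u) : Prop :=
  w.IsCycle ∧ ∀ x ∈ w.support, ∀ y ∈ w.support, G.Adj x y → consecIn w.support x y

/-- A graph is chordal if it has no induced cycle of length at least 4. -/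
def Chordal (G : SimpleGraph V) : Prop :=
  ¬ ∃ (u : V) (w : G.Walk u u), IsInducedCycleW G w ∧ 4 ≤ w.length

/-- The cycle `w` has an odd chord: an edge of `G` joining two vertices of the cycle
whose distance along the cycle is odd and greater than 1. -/
def HasOddChord (G : SimpleGraph V) {u : V} (w : G.Walk u u) : Prop :=
  ∃ i j : ℕ, ∃ hi : i < w.support.length, ∃ hj : j < w.support.length, i < j ∧
    G.Adj (w.support.get ⟨i, hi⟩) (w.support.get ⟨j, hj⟩) ∧
    Odd (min (j - i) (w.length - (j - i))) ∧ 1 < min (j - i) (w.length - (j - i))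

/-- A graph is strongly chordal if it is chordal and every even cycle of length
at least 6 has an odd chord. -/
def StronglyChordal (G : SimpleGraph V) : Prop :=
  Chordal G ∧ ∀ (u : V) (w : G.Walk u u), w.IsCycle → Even w.length → 6 ≤ w.length →
    HasOddChord G w

/-- Closed neighborhood `N[v]`. -/
def closedNbhd (G : SimpleGraph V) (v : V) : Set V := insert v (G.neighborSet v)

/-- A vertex is simple if the closed neighborhoods of its closed neighbors form a
family totally ordered by inclusion. -/
def SimpleVtx (G : SimpleGraph V) (v : V) : Prop :=
  ∀ u ∈ closedNbhd G v, ∀ w ∈ closedNbhd G v,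
    closedNbhd G u ⊆ closedNbhd G w ∨ closedNbhd G w ⊆ closedNbhd G u

/-- A vertex is simplicial if its closed neighborhood is a clique. -/
def SimplicialVtx (G : SimpleGraph V) (v : V) : Prop :=
  G.IsClique (closedNbhd G v)

/-- An even-chorded path: a path with no odd chord and such that no endpoint
lies in a chord. -/
def IsEvenChorded (G : SimpleGraph V) {u v : V} (w : G.Walk u v) : Prop :=
  w.IsPath ∧ ∀ i j : ℕ, ∀ hi : i < w.support.length, ∀ hj : j < w.support.length,
    i + 1 < j → G.Adj (w.support.get ⟨i, hi⟩) (w.support.get ⟨j, hj⟩) →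
      Even (j - i) ∧ 0 < i ∧ j < w.support.length - 1

/-- A tolled walk `u₀u₁…u_k`: `u₀uᵢ ∈ E(G)` implies `i = 1` and `u_ju_k ∈ E(G)`
implies `j = k - 1`. -/
def IsTolledWalk (G : SimpleGraph V) {u v : V} (w : G.Walk u v) : Prop :=
  ∀ i : ℕ, ∀ hi : i < w.support.length,
    (G.Adj u (w.support.get ⟨i, hi⟩) → i = 1) ∧
    (G.Adj (w.support.get ⟨i, hi⟩) v → i = w.support.length - 2)

/-- A weakly toll walk `u₀u₁…u_k`: `u₀uᵢ ∈ E(G)` implies `uᵢ = u₁` and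
`u_ju_k ∈ E(G)` implies `u_j = u_{k-1}`. -/
def IsWeaklyTollWalk (G : SimpleGraph V) {u v : V} (w : G.Walk u v) : Prop :=
  ∀ i : ℕ, ∀ hi : i < w.support.length,
    (G.Adj u (w.support.get ⟨i, hi⟩) → w.support.get ⟨i, hi⟩ = w.support.getD 1 u) ∧
    (G.Adj (w.support.get ⟨i, hi⟩) v → w.support.get ⟨i, hi⟩ = w.support.getD (w.support.length - 2) v)

/-- An interval graph: vertices can be assigned nonempty closed real intervals so that
distinct vertices are adjacent iff the intervals intersect. -/
def IsIntervalGraph (G : SimpleGraph V) : Prop :=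
  ∃ a b : V → ℝ, (∀ v, a v ≤ b v) ∧
    ∀ u v : V, u ≠ v →
      (G.Adj u v ↔ (Set.Icc (a u) (b u) ∩ Set.Icc (a v) (b v)).Nonempty)

/-- A proper interval graph: an interval model in which no interval properly
contains another. -/
def IsProperIntervalGraph (G : SimpleGraph V) : Prop :=
  ∃ a b : V → ℝ, (∀ v, a v ≤ b v) ∧
    (∀ u v : V, u ≠ v →
      (G.Adj u v ↔ (Set.Icc (a u) (b u) ∩ Set.Icc (a v) (b v)).Nonempty)) ∧
    ∀ u v : V, ¬ (Set.Icc (a u) (b u) ⊂ Set.Icc (a v) (b v))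

/-- An end vertex: some interval model in which its interval is an end interval. -/
def IsEndVertex (G : SimpleGraph V) (x : V) : Prop :=
  ∃ a b : V → ℝ, (∀ v, a v ≤ b v) ∧
    (∀ u v : V, u ≠ v →
      (G.Adj u v ↔ (Set.Icc (a u) (b u) ∩ Set.Icc (a v) (b v)).Nonempty)) ∧
    ((∀ v, a x ≤ a v) ∨ (∀ v, b v ≤ b x))

/-- `G` contains an induced subgraph isomorphic to `H`. -/
def HasInducedSubgraphIso (G : SimpleGraph V) (H : SimpleGraph W) : Prop :=
  ∃ f : W ↪ V, ∀ a b : W, G.Adj (f a) (f b) ↔ H.Adj a b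

def gemGraph : SimpleGraph (Fin 5) :=
  SimpleGraph.fromRel fun a b =>
    ((a : ℕ), (b : ℕ)) ∈ [(0,1),(1,2),(2,3),(4,0),(4,1),(4,2),(4,3)]

def houseGraph : SimpleGraph (Fin 5) :=
  SimpleGraph.fromRel fun a b =>
    ((a : ℕ), (b : ℕ)) ∈ [(0,1),(1,2),(2,3),(0,3),(0,4),(1,4)]

def dominoGraph : SimpleGraph (Fin 6) :=
  SimpleGraph.fromRel fun a b =>
    ((a : ℕ), (b : ℕ)) ∈ [(0,1),(1,2),(2,3),(0,3),(2,4),(4,5),(3,5)]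

def aGraph : SimpleGraph (Fin 6) :=
  SimpleGraph.fromRel fun a b =>
    ((a : ℕ), (b : ℕ)) ∈ [(0,1),(1,2),(2,3),(0,3),(2,4),(3,5)]

/-- A triangle path: a path such that any two of its vertices at distance
greater than 2 along the path are non-adjacent in `G`. -/
def IsTrianglePath (G : SimpleGraph V) {u v : V} (w : G.Walk u v) : Prop :=
  w.IsPath ∧ ∀ i j : ℕ, ∀ hi : i < w.support.length, ∀ hj : j < w.support.length,
    i + 2 < j → ¬ G.Adj (w.support.get ⟨i, hi⟩) (w.support.get ⟨j, hj⟩)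

/-- `S` is `H`-free convex. -/
def HFreeConvex [Fintype W] (G : SimpleGraph V) (H : SimpleGraph W) (S : Set V) : Prop :=
  ∀ (S' : Finset V), ↑S' ⊆ S → S'.card = Fintype.card W - 1 →
    ∀ x : V, Nonempty ((G.induce (↑S' ∪ {x} : Set V)) ≃g H) → x ∈ S

/-- `a b c d` is an induced path on four vertices of `G`. -/
def InducedP4 (G : SimpleGraph V) (a b c d : V) : Prop :=
  G.Adj a b ∧ G.Adj b c ∧ G.Adj c d ∧ ¬ G.Adj a c ∧ ¬ G.Adj a d ∧ ¬ G.Adj b d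

/-- Every connected component of `G` is a star. -/
def StarForest (G : SimpleGraph V) : Prop :=
  ∀ v : V, ∃ c : V, G.Reachable v c ∧ (∀ x, G.Reachable c x → x ≠ c → G.Adj c x) ∧
    ∀ x y, G.Adj c x → G.Adj c y → ¬ G.Adj x y

/-- An induced `n`-gem in `G`: `x 0, …, x n` is an induced path and `u` is adjacent
to all of them, the whole forming an induced subgraph of `G`. -/
def IsInducedNGem (G : SimpleGraph V) (n : ℕ) (x : Fin (n + 1) → V) (u : V) : Prop :=
  Function.Injective x ∧ (∀ i, x i ≠ u) ∧
  (∀ i j, G.Adj (x i) (x j) ↔ ((i : ℕ) + 1 = (j : ℕ) ∨ (j : ℕ) + 1 = (i : ℕ))) ∧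
  (∀ i, G.Adj u (x i))

/-- The induced `n`-gem is solved: there is an induced path of length 3 in `G`
connecting `x 0` and `x n` that avoids `u`. -/
def GemSolved (G : SimpleGraph V) (n : ℕ) (x : Fin (n + 1) → V) (u : V) : Prop :=
  ∃ w : G.Walk (x 0) (x (Fin.last n)), IsInducedPathW G w ∧ w.length = 3 ∧ u ∉ w.support

/-!
Suppose first that `G` is strongly chordal. The key point is that every convex set `T ≠ V` misses
a simple vertex. We may take `T` maximal. If no vertex of `T` has a neighbour outside `T`, then a
single isolated vertex is missing from `T`. Otherwise, among the vertices of `T` with a neighbour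
outside `T`, choose `q` with `N[q] ∩ T` maximal; then `T ∪ N[q]` is again convex, hence everything,
so that `q` is adjacent to every vertex outside `T`. By induction `G - q` has a simple vertex
`x ∉ T`, and the choice of `q` forces `N[y] ⊆ N[q]` for all `y ∈ N[x]`, so `x` is simple in `G`.
Applied in `G[S]` to the hull of the extreme vertices of a convex set `S`, this shows that the hull
is `S`, because a simple vertex of `G[S]` is an extreme vertex of `S`.

Conversely, in a convex geometry every nonempty set has a point outside the hull of the others.
Apply this to the vertex set of a cycle. In an induced cycle of length at least 4 each vertex is
the middle of an induced path with three vertices, so `G` is chordal. It follows that in a cycle of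
length at least 6 without odd chords each vertex is in the hull of the two vertices before it and
the two after it.
-/

section Sequences

variable {G : SimpleGraph V} {u : ℤ → V} {a b : ℤ} {q : V}

/-- The vertices `u a, u (a + 1), …, u b` form a path of `G` in this order. Indexing paths by
integers lets them be cut, extended at either end and reversed without renumbering. -/
structure IsPathOn (G : SimpleGraph V) (u : ℤ → V) (a b : ℤ) : Prop where
  ne : ∀ ⦃i j⦄, a ≤ i → i < j → j ≤ b → u i ≠ u j
  adj : ∀ ⦃k⦄, a ≤ k → k < b → G.Adj (u k) (u (k + 1))

/-- The path `u a, …, u b` has no odd chord. -/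
structure IsOddChordlessOn (G : SimpleGraph V) (u : ℤ → V) (a b : ℤ) : Prop
    extends IsPathOn G u a b where
  chord : ∀ ⦃i j⦄, a ≤ i → i + 1 < j → j ≤ b → G.Adj (u i) (u j) → i % 2 = j % 2

/-- The path `u a, …, u b` is even-chorded: it has no odd chord, and no chord at `u a` or
`u b`. -/
structure IsEvenChordedOn (G : SimpleGraph V) (u : ℤ → V) (a b : ℤ) : Prop
    extends IsOddChordlessOn G u a b where
  start : ∀ ⦃k⦄, a + 1 < k → k ≤ b → ¬ G.Adj (u a) (u k)
  finish : ∀ ⦃k⦄, a ≤ k → k + 1 < b → ¬ G.Adj (u k) (u b)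

lemma IsPathOn.mono {a' b' : ℤ} (h : IsPathOn G u a b) (ha : a ≤ a') (hb : b' ≤ b) :
    IsPathOn G u a' b' where
  ne _ _ hi hij hj := h.ne (ha.trans hi) hij (hj.trans hb)
  adj _ hk hk' := h.adj (ha.trans hk) (hk'.trans_le hb)

lemma IsOddChordlessOn.mono {a' b' : ℤ} (h : IsOddChordlessOn G u a b) (ha : a ≤ a')
    (hb : b' ≤ b) : IsOddChordlessOn G u a' b' where
  toIsPathOn := h.toIsPathOn.mono ha hb
  chord _ _ hi hij hj := h.chord (ha.trans hi) hij (hj.trans hb)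

lemma IsPathOn.reverse (h : IsPathOn G u a b) : IsPathOn G (fun k => u (-k)) (-b) (-a) where
  ne i j hi hij hj := (h.ne (i := -j) (j := -i) (by lia) (by lia) (by lia)).symm
  adj k hk hk' := by
    have hadj := h.adj (k := -(k + 1)) (by lia) (by lia)
    rw [neg_add, neg_add_cancel_right] at hadj
    rw [neg_add]
    exact hadj.symm

lemma IsEvenChordedOn.reverse (h : IsEvenChordedOn G u a b) :
    IsEvenChordedOn G (fun k => u (-k)) (-b) (-a) where
  toIsPathOn := h.toIsPathOn.reverse
  chord i j hi hij hj hadj := by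
    have := h.chord (i := -j) (j := -i) (by lia) (by lia) (by lia) hadj.symm
    lia
  start k hk hk' hadj := by
    rw [neg_neg] at hadj
    exact h.finish (k := -k) (by lia) (by lia) hadj.symm
  finish k hk hk' hadj := by
    rw [neg_neg] at hadj
    exact h.start (k := -k) (by lia) (by lia) hadj.symm

lemma IsPathOn.update (h : IsPathOn G u a b) (hq : ∀ k, a ≤ k → k ≤ b → q ≠ u k)
    (hadj : G.Adj q (u a)) : IsPathOn G (Function.update u (a - 1) q) (a - 1) b where
  ne i j hi hij hj := by
    rw [Function.update_of_ne (by lia : j ≠ a - 1)]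
    obtain rfl | hi := hi.eq_or_lt
    · rw [Function.update_self]
      exact hq j (by lia) hj
    · rw [Function.update_of_ne hi.ne']
      exact h.ne (by lia) hij hj
  adj k hk hk' := by
    rw [Function.update_of_ne (by lia : k + 1 ≠ a - 1)]
    obtain rfl | hk := hk.eq_or_lt
    · rwa [Function.update_self, sub_add_cancel]
    · rw [Function.update_of_ne hk.ne']
      exact h.adj (by lia) hk'

lemma IsOddChordlessOn.update (h : IsOddChordlessOn G u a b)
    (hq : ∀ k, a ≤ k → k ≤ b → q ≠ u k) (hadj : G.Adj q (u a))
    (hparity : ∀ k, a < k → k ≤ b → G.Adj q (u k) → k % 2 ≠ a % 2) :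
    IsOddChordlessOn G (Function.update u (a - 1) q) (a - 1) b where
  toIsPathOn := h.toIsPathOn.update hq hadj
  chord i j hi hij hj hadj := by
    rw [Function.update_of_ne (by lia : j ≠ a - 1)] at hadj
    obtain rfl | hi := hi.eq_or_lt
    · rw [Function.update_self] at hadj
      have := hparity j (by lia) hj hadj
      lia
    · rw [Function.update_of_ne hi.ne'] at hadj
      exact h.chord (by lia) hij hj hadj

lemma IsPathOn.exists_walk (h : IsPathOn G u a b) (hab : a ≤ b) :
    ∃ w : G.Walk (u a) (u b), w.IsPath ∧ w.length = b - a ∧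
      ∀ k : ℕ, k ≤ w.length → w.getVert k = u (a + k) := by
  obtain ⟨w, hlength, hget⟩ : ∃ w : G.Walk (u a) (u b), w.length = b - a ∧
      ∀ k : ℕ, k ≤ w.length → w.getVert k = u (a + k) := by
    induction a, hab using Int.leInductionDown with
    | base => exact ⟨.nil, by simp⟩
    | pred a hab ih =>
      obtain ⟨w, hlength, hget⟩ := ih (h.mono (by lia) le_rfl)
      have hadj : G.Adj (u (a - 1)) (u a) := by simpa using h.adj le_rfl (by lia : a - 1 < b)
      refine ⟨.cons hadj w, by rw [Walk.length_cons]; lia, ?_⟩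
      rintro (_ | k) hk
      · simp
      · rw [Walk.getVert_cons_succ, hget k (by simpa using hk)]
        congr 1
        lia
  refine ⟨w, (Walk.IsPath.getVert_injOn_iff w).1 fun i hi j hj hij => ?_, hlength, hget⟩
  simp only [Set.mem_ofPred_eq] at hi hj
  rw [hget i hi, hget j hj] at hij
  by_contra hne
  obtain hlt | hlt := Nat.lt_or_gt_of_ne hne
  · exact h.ne (by lia) (by lia) (by lia) hij
  · exact h.ne (by lia) (by lia) (by lia) hij.symm

lemma isEvenChorded_iff_getVert {x y : V} {w : G.Walk x y} :
    IsEvenChorded G w ↔ w.IsPath ∧ ∀ i j : ℕ, i + 1 < j → j ≤ w.length →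
      G.Adj (w.getVert i) (w.getVert j) → Even (j - i) ∧ 0 < i ∧ j < w.length := by
  simp only [IsEvenChorded, Walk.length_support, List.get_eq_getElem,
    Walk.support_getElem_eq_getVert, Nat.lt_succ_iff, Nat.add_sub_cancel]
  exact and_congr_right fun _ =>
    ⟨fun h i j hij hj => h i j (by lia) hj hij, fun h i j _ hj hij => h i j hij hj⟩

lemma IsEvenChordedOn.exists_walk (h : IsEvenChordedOn G u a b) (hab : a ≤ b) :
    ∃ w : G.Walk (u a) (u b), IsEvenChorded G w ∧ w.length = b - a ∧
      ∀ k : ℕ, k ≤ w.length → w.getVert k = u (a + k) := by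
  obtain ⟨w, hpath, hlength, hget⟩ := h.toIsPathOn.exists_walk hab
  refine ⟨w, isEvenChorded_iff_getVert.2 ⟨hpath, fun i j hij hj hadj => ?_⟩, hlength, hget⟩
  rw [hget i (by lia), hget j hj] at hadj
  have hparity := h.chord (by lia) (by lia) (by lia) hadj
  refine ⟨by rw [Nat.even_iff]; lia, Nat.pos_of_ne_zero ?_, hj.lt_of_ne ?_⟩
  · rintro rfl
    exact h.start (by lia) (by lia : a + j ≤ b) (by simpa using hadj)
  · rintro rfl
    refine h.finish (by lia) (by lia : a + i + 1 < b) ?_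
    rwa [hlength, add_sub_cancel] at hadj

lemma isPathOn_getVert {x y : V} {w : G.Walk x y} (hw : w.IsPath) :
    IsPathOn G (fun k => w.getVert k.toNat) 0 w.length where
  ne i j hi hij hj heq := by
    have := hw.getVert_injOn (by rw [Set.mem_ofPred_eq]; lia)
      (by rw [Set.mem_ofPred_eq]; lia) heq
    lia
  adj k hk hk' := by
    rw [show (k + 1).toNat = k.toNat + 1 by lia]
    exact w.adj_getVert_succ (by lia)

lemma IsEvenChorded.isEvenChordedOn {x y : V} {w : G.Walk x y} (h : IsEvenChorded G w) :
    IsEvenChordedOn G (fun k => w.getVert k.toNat) 0 w.length := by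
  obtain ⟨hpath, hchord⟩ := isEvenChorded_iff_getVert.1 h
  refine ⟨⟨isPathOn_getVert hpath, fun i j hi hij hj hadj => ?_⟩,
    fun k hk hk' hadj => ?_, fun k hk hk' hadj => ?_⟩
  · have := Nat.even_iff.1 (hchord _ _ (by lia) (by lia) hadj).1
    omega
  · exact (hchord _ _ (by lia) (by lia) hadj).2.1.ne' rfl
  · have := (hchord _ _ (by lia) (by lia) hadj).2.2
    lia

/-- Convexity of `T` with respect to the even-chorded paths of `G`. -/
abbrev StrongConvex (G : SimpleGraph V) (T : Set V) : Prop :=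
  PConvex G (fun _ _ w => IsEvenChorded G w) T

lemma strongConvex_iff {T : Set V} :
    StrongConvex G T ↔ ∀ ⦃u : ℤ → V⦄ ⦃a b : ℤ⦄, IsEvenChordedOn G u a b → u a ∈ T → u b ∈ T →
      ∀ k, a ≤ k → k ≤ b → u k ∈ T := by
  constructor
  · intro hT u a b h ha hb k hak hkb
    obtain ⟨w, hw, hlength, hget⟩ := h.exists_walk (hak.trans hkb)
    refine hT ha hb w hw _ (w.mem_support_iff_exists_getVert.2 ⟨(k - a).toNat, ?_, by lia⟩)
    rw [hget _ (by lia)]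
    congr 1
    lia
  · intro hT x y hx hy w hw z hz
    obtain ⟨n, rfl, hn⟩ := w.mem_support_iff_exists_getVert.1 hz
    simpa using hT hw.isEvenChordedOn (by simpa using hx) (by simpa using hy) n (by lia) (by lia)

lemma exists_last_index {P : ℤ → Prop} (hab : a ≤ b) (ha : P a) :
    ∃ k, a ≤ k ∧ k ≤ b ∧ P k ∧ ∀ i, k < i → i ≤ b → ¬ P i := by
  obtain ⟨k, ⟨hkb, hk⟩, hmax⟩ :=
    Int.exists_greatest_of_bdd (P := fun k => k ≤ b ∧ P k) ⟨b, fun _ h => h.1⟩ ⟨a, hab, ha⟩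
  exact ⟨k, hmax a ⟨hab, ha⟩, hkb, hk, fun i hki hib hi => hki.not_ge (hmax i ⟨hib, hi⟩)⟩

lemma exists_first_index {P : ℤ → Prop} (hab : a ≤ b) (hb : P b) :
    ∃ k, a ≤ k ∧ k ≤ b ∧ P k ∧ ∀ i, a ≤ i → i < k → ¬ P i := by
  obtain ⟨k, ⟨hak, hk⟩, hmin⟩ :=
    Int.exists_least_of_bdd (P := fun k => a ≤ k ∧ P k) ⟨a, fun _ h => h.1⟩ ⟨b, hab, hb⟩
  exact ⟨k, hak, hmin b ⟨hab, hb⟩, hk, fun i hai hik hi => hik.not_ge (hmin i ⟨hai, hi⟩)⟩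

end Sequences

section Cycles

variable {G : SimpleGraph V} {u : ℤ → V} {a b : ℤ}

lemma IsPathOn.exists_isCycle (h : IsPathOn G u a b) (hab : a + 2 ≤ b) (hadj : G.Adj (u a) (u b)) :
    ∃ w : G.Walk (u a) (u a), w.IsCycle ∧ w.length = b - a + 1 ∧
      ∀ k, a ≤ k → k ≤ b → w.getVert (k - a).toNat = u k := by
  obtain ⟨p, hpath, hlength, hget⟩ := h.exists_walk (by lia)
  refine ⟨p.concat hadj.symm, ?_, by rw [Walk.length_concat]; lia, fun k hak hkb => ?_⟩
  · rw [← Walk.isCycle_reverse, Walk.reverse_concat, Walk.isCycle_iff_isPath_tail_and_le_length]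
    simp only [Walk.length_cons, Walk.length_reverse, Walk.tail_cons]
    exact ⟨by simpa using hpath, by lia⟩
  · rw [Walk.concat_eq_append, Walk.getVert_append', if_pos (by lia), hget _ (by lia),
      Int.toNat_of_nonneg (by lia), add_sub_cancel]

lemma Chordal.exists_chord (hG : Chordal G) (h : IsPathOn G u a b) (hab : a + 3 ≤ b)
    (hadj : G.Adj (u a) (u b)) :
    ∃ i j, a ≤ i ∧ i + 1 < j ∧ j ≤ b ∧ (a < i ∨ j < b) ∧ G.Adj (u i) (u j) := by
  by_contra! hchordless
  obtain ⟨w, hcycle, hlength, hget⟩ := h.exists_isCycle (by lia) hadj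
  have hedge : ∀ i j, a ≤ i → i < j → j ≤ b → G.Adj (u i) (u j) → s(u i, u j) ∈ w.edges := by
    intro i j hi hij hj hadj_ij
    rw [Walk.mk_mem_edges_iff_exists]
    obtain rfl | hlt := (Int.add_one_le_iff.2 hij).eq_or_lt
    · refine ⟨(i - a).toNat, by lia, ?_⟩
      rw [hget i hi (by lia), show (i - a).toNat + 1 = (i + 1 - a).toNat by lia,
        hget _ (by lia) hj]
    · by_cases hends : a < i ∨ j < b
      · exact (hchordless i j hi hlt hj hends hadj_ij).elim
      · obtain ⟨rfl, rfl⟩ : i = a ∧ j = b := by lia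
        refine ⟨(j - i).toNat, by lia, ?_⟩
        rw [hget j (by lia) le_rfl, show (j - i).toNat + 1 = w.length by lia,
          Walk.getVert_length, Sym2.eq_swap]
  refine hG ⟨u a, w, ⟨hcycle, fun x hx y hy hxy => ?_⟩, by lia⟩
  have hsupport : ∀ z ∈ w.support, ∃ k, a ≤ k ∧ k ≤ b ∧ u k = z := by
    intro z hz
    obtain ⟨n, rfl, hn⟩ := w.mem_support_iff_exists_getVert.1 hz
    obtain hn | rfl := hn.lt_or_eq
    · exact ⟨a + n, by lia, by lia, by simpa using (hget (a + n) (by lia) (by lia)).symm⟩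
    · exact ⟨a, le_rfl, by lia, w.getVert_length.symm⟩
  obtain ⟨i, hai, hib, rfl⟩ := hsupport x hx
  obtain ⟨j, haj, hjb, rfl⟩ := hsupport y hy
  rw [consecIn, Walk.infix_support_iff_mem_edges]
  obtain hij | rfl | hij := lt_trichotomy i j
  · exact hedge i j hai hij hjb hxy
  · exact (hxy.ne rfl).elim
  · exact Sym2.eq_swap ▸ hedge j i haj hij hib hxy.symm

lemma StronglyChordal.exists_odd_chord (hG : StronglyChordal G) (h : IsPathOn G u a b)
    (hab : a + 5 ≤ b) (hparity : a % 2 ≠ b % 2) (hadj : G.Adj (u a) (u b)) :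
    ∃ i j, a ≤ i ∧ i + 1 < j ∧ j ≤ b ∧ (a < i ∨ j < b) ∧ i % 2 ≠ j % 2 ∧ G.Adj (u i) (u j) := by
  obtain ⟨w, hcycle, hlength, hget⟩ := h.exists_isCycle (by lia) hadj
  obtain ⟨i, j, hi, hj, hij, hadj_ij, hodd, hdist⟩ :=
    hG.2 _ w hcycle (by rw [Nat.even_iff]; omega) (by lia)
  simp only [List.get_eq_getElem, Walk.support_getElem_eq_getVert] at hadj_ij
  rw [Walk.length_support, Nat.lt_succ_iff] at hi hj
  rw [Nat.odd_iff] at hodd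
  have hget' : ∀ k : ℕ, k < w.length → w.getVert k = u (a + k) := fun k hk => by
    simpa using hget (a + k) (by lia) (by lia)
  rw [hget' i (by lia)] at hadj_ij
  obtain hj | rfl := hj.lt_or_eq
  · rw [hget' j hj] at hadj_ij
    exact ⟨a + i, a + j, by lia, by lia, by lia, by lia, by omega, hadj_ij⟩
  · rw [Walk.getVert_length] at hadj_ij
    exact ⟨a, a + i, le_rfl, by lia, by lia, by lia, by omega, hadj_ij.symm⟩

end Cycles

section Holes

variable {G : SimpleGraph V} {u : ℤ → V} {i j : ℤ} {q x y z : V}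

lemma mem_closedNbhd : y ∈ closedNbhd G x ↔ y = x ∨ G.Adj x y := Iff.rfl

lemma self_mem_closedNbhd : x ∈ closedNbhd G x := Or.inl rfl

lemma mem_closedNbhd_comm : y ∈ closedNbhd G x ↔ x ∈ closedNbhd G y := by
  rw [mem_closedNbhd, mem_closedNbhd, eq_comm, G.adj_comm]

lemma not_adj_getVert_of_length_eq_dist {p : G.Walk x y} (hp : p.length = G.dist x y) {i j : ℕ}
    (hij : i + 1 < j) (hj : j ≤ p.length) : ¬ G.Adj (p.getVert i) (p.getVert j) := by
  intro hadj
  have := G.dist_le ((p.take i).append (.cons hadj (p.drop j)))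
  simp only [Walk.length_append, Walk.take_length, Walk.length_cons, Walk.drop_length] at this
  lia

lemma exists_chordless_isPathOn {s : Set V} (p : G.Walk x y) (hp : ∀ z ∈ p.support, z ∈ s) :
    ∃ (u : ℤ → V) (n : ℤ), 0 ≤ n ∧ IsPathOn G u 0 n ∧ u 0 = x ∧ u n = y ∧ (∀ k, u k ∈ s) ∧
      ∀ i j, 0 ≤ i → i + 1 < j → j ≤ n → ¬ G.Adj (u i) (u j) := by
  obtain ⟨w, hw⟩ := (p.induce s hp).reachable.exists_walk_length_eq_dist
  have hpath := isPathOn_getVert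
    ((Walk.isPath_map_iff_of_injective (f := (Embedding.induce s).toHom)
      Subtype.val_injective).2 (w.isPath_of_length_eq_dist hw))
  simp only [Walk.getVert_map, Walk.length_map] at hpath
  exact ⟨_, _, by lia, hpath, by simp, by simp, fun k => Subtype.coe_prop _,
    fun i j hi hij hj => not_adj_getVert_of_length_eq_dist hw (by lia) (by lia)⟩

lemma Chordal.adj_of_walk (hG : Chordal G) (hx : G.Adj q x) (hy : G.Adj q y) (hxy : x ≠ y)
    (p : G.Walk x y) (hp : ∀ z ∈ p.support, z ∈ closedNbhd G q → z = x ∨ z = y) :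
    G.Adj x y := by
  obtain ⟨u, n, hn, hpath, rfl, rfl, hmem, hchordless⟩ :=
    exists_chordless_isPathOn (s := {z | z ∈ closedNbhd G q → z = x ∨ z = y}) p hp
  have hends : ∀ k, 0 ≤ k → k ≤ n → u k ∈ closedNbhd G q → k = 0 ∨ k = n := by
    intro k hk hkn hmem_k
    by_contra! hk'
    obtain heq | heq := hmem k hmem_k
    · exact hpath.ne le_rfl (by lia) hkn heq.symm
    · exact hpath.ne hk (by lia) le_rfl heq
  by_contra hadj
  have hn2 : 2 ≤ n := by
    by_contra! hlt
    obtain rfl | rfl : n = 0 ∨ n = 1 := by lia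
    · exact hxy rfl
    · exact hadj (hpath.adj le_rfl (by lia))
  have hq : ∀ k, 0 ≤ k → k ≤ n → q ≠ u k := by
    rintro k hk hkn rfl
    obtain rfl | rfl := hends k hk hkn self_mem_closedNbhd
    exacts [G.irrefl hx, G.irrefl hy]
  have hcycle := hpath.update hq hx
  obtain ⟨i, j, hi, hij, hj, hne, hchord⟩ := hG.exists_chord hcycle (by lia) (by
    rwa [Function.update_self, Function.update_of_ne (by lia)])
  rw [Function.update_of_ne (by lia : j ≠ 0 - 1)] at hchord
  obtain rfl | hi := hi.eq_or_lt
  · rw [Function.update_self] at hchord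
    have := hends j (by lia) hj (Or.inr hchord)
    lia
  · rw [Function.update_of_ne hi.ne'] at hchord
    exact hchordless i j (by lia) hij hj hchord

lemma Chordal.adj_of_isPathOn (hG : Chordal G) (h : IsPathOn G u i j) (hij : i < j)
    (hi : G.Adj q (u i)) (hj : G.Adj q (u j))
    (hgap : ∀ k, i < k → k < j → u k ∉ closedNbhd G q) : G.Adj (u i) (u j) := by
  obtain ⟨w, -, hlength, hget⟩ := h.exists_walk hij.le
  refine hG.adj_of_walk hi hj (h.ne le_rfl hij le_rfl) w fun z hz hzq => ?_
  obtain ⟨n, rfl, hn⟩ := w.mem_support_iff_exists_getVert.1 hz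
  rw [hget n hn] at hzq ⊢
  by_contra! hends
  have hi : i + n ≠ i := fun h => hends.1 (congrArg u h)
  have hj : i + n ≠ j := fun h => hends.2 (congrArg u h)
  exact hgap _ (by lia) (by lia) hzq

lemma Chordal.adj_of_square {a b c d : V} (hG : Chordal G) (hab : G.Adj a b) (hbc : G.Adj b c)
    (hcd : G.Adj c d) (hda : G.Adj d a) (hbd : b ≠ d) (hac : c ∉ closedNbhd G a) :
    G.Adj b d := by
  refine hG.adj_of_walk hab hda.symm hbd (.cons hbc hcd.toWalk) fun z hz hza => ?_
  simp only [Walk.support_cons, Walk.support_nil, List.mem_cons, List.not_mem_nil,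
    or_false] at hz
  obtain rfl | rfl | rfl := hz
  exacts [Or.inl rfl, (hac hza).elim, Or.inr rfl]

end Holes

section Parity

variable {G : SimpleGraph V} {u : ℤ → V} {a b i j r : ℤ} {q : V}

lemma StronglyChordal.le_add_two_of_adj (hG : StronglyChordal G) (h : IsOddChordlessOn G u i j)
    (hparity : i % 2 = j % 2) (hq : ∀ k, i ≤ k → k ≤ j → q ≠ u k) (hi : G.Adj q (u i))
    (hj : G.Adj q (u j)) (hgap : ∀ k, i < k → k < j → k % 2 = i % 2 → ¬ G.Adj q (u k)) :
    j ≤ i + 2 := by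
  by_contra! hlt
  obtain ⟨k, l, hk, hkl, hl, hne, hodd, hchord⟩ :=
    hG.exists_odd_chord (h.toIsPathOn.update hq hi) (by omega) (by omega)
      (by rwa [Function.update_self, Function.update_of_ne (by lia)])
  rw [Function.update_of_ne (by lia : l ≠ i - 1)] at hchord
  obtain rfl | hk := hk.eq_or_lt
  · rw [Function.update_self] at hchord
    exact hgap l (by lia) (by lia) (by omega) hchord
  · rw [Function.update_of_ne hk.ne'] at hchord
    exact hodd (h.chord (by lia) hkl hl hchord)

lemma IsPathOn.ne_of_forall_not_adj (h : IsPathOn G u i j) (hi : G.Adj q (u i))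
    (hne : q ≠ u (i + 1)) (hgap : ∀ k, i < k → k < j → ¬ G.Adj q (u k)) :
    ∀ k, i ≤ k → k ≤ j → q ≠ u k := by
  rintro k hik hkj rfl
  obtain rfl | rfl | hlt : k = i ∨ k = i + 1 ∨ i + 1 < k := by lia
  · exact G.irrefl hi
  · exact hne rfl
  · refine hgap (k - 1) (by lia) (by lia) ?_
    simpa using (h.adj (by lia : i ≤ k - 1) (by lia)).symm

lemma StronglyChordal.le_add_two_of_forall_not_adj (hG : StronglyChordal G)
    (h : IsOddChordlessOn G u i j) (hi : G.Adj q (u i)) (hj : G.Adj q (u j))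
    (hne : q ≠ u (i + 1)) (hgap : ∀ k, i < k → k < j → ¬ G.Adj q (u k)) : j ≤ i + 2 := by
  by_contra! hlt
  have hq := h.toIsPathOn.ne_of_forall_not_adj hi hne hgap
  have hadj : G.Adj (u i) (u j) := hG.1.adj_of_isPathOn h.toIsPathOn (by lia) hi hj
    fun k hik hkj hk => hk.elim (fun heq => hq k hik.le hkj.le heq.symm) (hgap k hik hkj)
  have := hG.le_add_two_of_adj h (h.chord le_rfl (by lia) le_rfl hadj) hq hi hj
    fun k hik hkj _ => hgap k hik hkj
  lia

lemma StronglyChordal.adj_of_parity_between (hG : StronglyChordal G)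
    (h : IsOddChordlessOn G u i j) (hq : ∀ k, i ≤ k → k ≤ j → q ≠ u k) (hi : G.Adj q (u i))
    (hj : G.Adj q (u j)) (hir : i ≤ r) (hrj : r ≤ j) (hpi : i % 2 = r % 2)
    (hpj : j % 2 = r % 2) : G.Adj q (u r) := by
  by_contra hr
  obtain ⟨l, hil, hlr, ⟨hpl, hl⟩, hlast⟩ :=
    exists_last_index (P := fun k => k % 2 = r % 2 ∧ G.Adj q (u k)) hir ⟨hpi, hi⟩
  obtain ⟨m, hrm, hmj, ⟨hpm, hm⟩, hfirst⟩ :=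
    exists_first_index (P := fun k => k % 2 = r % 2 ∧ G.Adj q (u k)) hrj ⟨hpj, hj⟩
  have hne_l : l ≠ r := by rintro rfl; exact hr hl
  have hne_m : m ≠ r := by rintro rfl; exact hr hm
  have hml := hG.le_add_two_of_adj (h.mono hil hmj) (hpl.trans hpm.symm)
    (fun k hk hk' => hq k (by lia) (by lia)) hl hm fun k hlk hkm hpk hk => by
      obtain hkr | hkr := le_or_gt k r
      · exact hlast k hlk hkr ⟨hpk.trans hpl, hk⟩
      · exact hfirst k hkr.le hkm ⟨hpk.trans hpl, hk⟩
  omega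

lemma Chordal.adj_succ_start (hG : Chordal G) (h : IsEvenChordedOn G u a b)
    (hq : ∀ k, a ≤ k → k ≤ b → q ≠ u k) (ha : G.Adj q (u a)) (hai : a < i) (hib : i ≤ b)
    (hi : G.Adj q (u i)) : G.Adj q (u (a + 1)) := by
  obtain ⟨j, haj, hji, hj, hfirst⟩ := exists_first_index (P := fun k => G.Adj q (u k)) hai hi
  have hadj : G.Adj (u a) (u j) :=
    hG.adj_of_isPathOn (h.toIsPathOn.mono le_rfl (hji.trans hib)) haj ha hj
      fun k hak hkj hk => hk.elim (fun heq => hq k hak.le (by lia) heq.symm)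
        (hfirst k hak hkj)
  obtain rfl : j = a + 1 := by
    by_contra hne
    exact h.start (by lia) (hji.trans hib) hadj
  exact hj

lemma Chordal.adj_pred_finish (hG : Chordal G) (h : IsEvenChordedOn G u a b)
    (hq : ∀ k, a ≤ k → k ≤ b → q ≠ u k) (hb : G.Adj q (u b)) (hai : a ≤ i) (hib : i < b)
    (hi : G.Adj q (u i)) : G.Adj q (u (b - 1)) := by
  have := hG.adj_succ_start h.reverse (q := q) (i := -i)
    (fun k hk hk' => hq (-k) (by lia) (by lia)) (by rwa [neg_neg]) (by lia) (by lia)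
    (by rwa [neg_neg])
  rwa [neg_add, neg_neg, ← sub_eq_add_neg] at this

lemma IsPathOn.mem_closedNbhd {m k : ℤ} (h : IsPathOn G u a b) (hak : a ≤ k) (hkb : k ≤ b)
    (ham : a ≤ m) (hmb : m ≤ b) (hkm : k ≤ m + 1) (hmk : m ≤ k + 1) :
    u k ∈ closedNbhd G (u m) := by
  obtain rfl | rfl | rfl : k = m ∨ k = m + 1 ∨ m = k + 1 := by lia
  · exact self_mem_closedNbhd
  · exact Or.inr (h.adj ham (by lia))
  · exact Or.inr (h.adj hak (by lia)).symm

lemma StronglyChordal.strongConvex_closedNbhd (hG : StronglyChordal G) (q : V) :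
    StrongConvex G (closedNbhd G q) := by
  refine strongConvex_iff.2 fun u a b h ha hb k hak hkb => ?_
  by_cases hq : ∃ m, a ≤ m ∧ m ≤ b ∧ q = u m
  · obtain ⟨m, ham, hmb, rfl⟩ := hq
    have hma : m ≤ a + 1 := by
      by_contra! hlt
      exact ha.elim (h.ne le_rfl (by lia) hmb) fun hadj => h.start hlt hmb hadj.symm
    have hbm : b ≤ m + 1 := by
      by_contra! hlt
      exact hb.elim (fun heq => h.ne ham (by lia) le_rfl heq.symm) (h.finish ham hlt)
    exact h.mem_closedNbhd hak hkb ham hmb (by lia) (by lia)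
  · push Not at hq
    replace ha : G.Adj q (u a) := ha.resolve_left (hq a le_rfl (by lia)).symm
    replace hb : G.Adj q (u b) := hb.resolve_left (hq b (by lia) le_rfl).symm
    obtain ⟨i, hai, hik, hpi, hi⟩ : ∃ i, a ≤ i ∧ i ≤ k ∧ i % 2 = k % 2 ∧ G.Adj q (u i) := by
      by_cases hp : a % 2 = k % 2
      · exact ⟨a, le_rfl, hak, hp, ha⟩
      · exact ⟨a + 1, by lia, by omega, by omega,
          hG.1.adj_succ_start h hq ha (by omega) le_rfl hb⟩
    obtain ⟨j, hjb, hkj, hpj, hj⟩ : ∃ j, j ≤ b ∧ k ≤ j ∧ j % 2 = k % 2 ∧ G.Adj q (u j) := by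
      by_cases hp : b % 2 = k % 2
      · exact ⟨b, le_rfl, hkb, hp, hb⟩
      · exact ⟨b - 1, by lia, by omega, by omega,
          hG.1.adj_pred_finish h hq hb le_rfl (by omega) ha⟩
    exact Or.inr (hG.adj_of_parity_between (h.toIsOddChordlessOn.mono hai hjb)
      (fun l hl hl' => hq l (by lia) (by lia)) hi hj hik hkj hpi hpj)

lemma StronglyChordal.exists_last_adj_of_parity (hG : StronglyChordal G)
    (h : IsEvenChordedOn G u a b) (ha : G.Adj q (u a)) (har : a ≤ r) (hri : r < i) (hib : i ≤ b)
    (hr : u r ∉ closedNbhd G q) (hi : G.Adj q (u i)) :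
    ∃ e, a ≤ e ∧ e ≤ r ∧ G.Adj q (u e) ∧ (∀ k, e ≤ k → k ≤ b → q ≠ u k) ∧
      ∀ k, e < k → k ≤ b → G.Adj q (u k) → k % 2 ≠ e % 2 := by
  by_cases hq : ∃ m, a ≤ m ∧ m ≤ b ∧ q = u m
  · obtain ⟨m, ham, hmb, rfl⟩ := hq
    obtain rfl : m = a + 1 := by
      have hma : m ≠ a := by rintro rfl; exact G.irrefl ha
      by_contra hne
      exact h.start (by lia) hmb ha.symm
    have hmr : a + 1 + 1 < r := by
      by_contra! hle
      exact hr (h.mem_closedNbhd har (by lia) ham hmb (by lia) (by lia))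
    exact ⟨a + 1 + 1, by lia, by lia, h.adj ham (by lia),
      fun k hk hkb => h.ne ham (by lia) hkb, fun k hk hkb hadj hp => by
        have := h.chord ham (by lia) hkb hadj
        omega⟩
  · push Not at hq
    obtain ⟨s, has, hsr, hps, hs⟩ : ∃ s, a ≤ s ∧ s ≤ r ∧ s % 2 = r % 2 ∧ G.Adj q (u s) := by
      by_cases hp : a % 2 = r % 2
      · exact ⟨a, le_rfl, har, hp, ha⟩
      · exact ⟨a + 1, by lia, by omega, by omega,
          hG.1.adj_succ_start h hq ha (by lia) hib hi⟩
    obtain ⟨e, hse, her, ⟨hpe, he⟩, hlast⟩ :=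
      exists_last_index (P := fun k => k % 2 = r % 2 ∧ G.Adj q (u k)) hsr ⟨hps, hs⟩
    refine ⟨e, by lia, her, he, fun k hk => hq k (by lia), fun k hek hkb hk hpk => ?_⟩
    obtain hkr | hrk := le_or_gt k r
    · exact hlast k hek hkr ⟨hpk.trans hpe, hk⟩
    · exact hr (Or.inr (hG.adj_of_parity_between (h.toIsOddChordlessOn.mono (by lia) hkb)
        (fun l hl hl' => hq l (by lia) (by lia)) he hk her hrk.le hpe (hpk.trans hpe)))

end Parity

section ConvexSets

variable {G : SimpleGraph V} {T : Set V} {u v : ℤ → V} {a b s j m n r : ℤ} {q x : V}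

lemma StrongConvex.mem_of_adj_adj (hT : StrongConvex G T) {x y z : V} (hx : x ∈ T) (hz : z ∈ T)
    (hxy : G.Adj x y) (hyz : G.Adj y z) (hxz : z ∉ closedNbhd G x) : y ∈ T := by
  rw [mem_closedNbhd, not_or] at hxz
  have heven : IsEvenChorded G (.cons hxy hyz.toWalk) := by
    refine isEvenChorded_iff_getVert.2 ⟨?_, fun i j hij hj hadj => ?_⟩
    · simp [hxy.ne, hyz.ne, Ne.symm hxz.1]
    · simp only [Walk.length_cons, Walk.length_nil] at hj
      obtain ⟨rfl, rfl⟩ : i = 0 ∧ j = 2 := by lia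
      exact (hxz.2 hadj).elim
  exact hT hx hz _ heven y (by simp)

lemma StrongConvex.mem_of_path_five (hG : Chordal G) (hT : StrongConvex G T) {x₁ x₂ x₃ x₄ x₅ : V}
    (h₁ : x₁ ∈ T) (h₂ : x₂ ∈ T) (h₄ : x₄ ∈ T) (h₅ : x₅ ∈ T) (h₁₂ : G.Adj x₁ x₂)
    (h₂₃ : G.Adj x₂ x₃) (h₃₄ : G.Adj x₃ x₄) (h₄₅ : G.Adj x₄ x₅) (h₁₄ : x₄ ∉ closedNbhd G x₁)
    (h₂₅ : x₅ ∉ closedNbhd G x₂) : x₃ ∈ T := by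
  by_contra h₃
  have h₂₄ : x₄ ∈ closedNbhd G x₂ := not_not.1 fun h => h₃ (hT.mem_of_adj_adj h₂ h₄ h₂₃ h₃₄ h)
  have h₁₃ : ¬ G.Adj x₁ x₃ := fun h => h₃ (hT.mem_of_adj_adj h₁ h₄ h h₃₄ h₁₄)
  have h₃₅ : ¬ G.Adj x₃ x₅ := fun h => h₃ (hT.mem_of_adj_adj h₂ h₅ h₂₃ h h₂₅)
  rw [mem_closedNbhd, not_or] at h₂₅
  have hne₂₄ : x₄ ≠ x₂ := by rintro rfl; exact h₁₄ (Or.inr h₁₂)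
  have h₁₅ : ¬ G.Adj x₁ x₅ := fun h =>
    h₂₅.2 (hG.adj_of_square h₁₂ (h₂₄.resolve_left hne₂₄) h₄₅ h.symm (Ne.symm h₂₅.1) h₁₄)
  rw [mem_closedNbhd, not_or] at h₁₄
  have hne₁₃ : x₁ ≠ x₃ := by rintro rfl; exact h₃ h₁
  have hne₃₅ : x₃ ≠ x₅ := by rintro rfl; exact h₃ h₅
  have hne₁₅ : x₁ ≠ x₅ := by rintro rfl; exact h₂₅.2 h₁₂.symm
  have heven : IsEvenChorded G (.cons h₁₂ (.cons h₂₃ (.cons h₃₄ h₄₅.toWalk))) := by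
    refine isEvenChorded_iff_getVert.2 ⟨?_, fun i j hij hj hadj => ?_⟩
    · simp [h₁₂.ne, h₂₃.ne, h₃₄.ne, h₄₅.ne, hne₁₃, hne₃₅, hne₁₅, hne₂₄.symm, Ne.symm h₁₄.1,
        Ne.symm h₂₅.1]
    · simp only [Walk.length_cons, Walk.length_nil] at hj ⊢
      have hi : i ≤ 2 := by lia
      interval_cases i <;> interval_cases j <;> simp_all
  exact h₃ (hT h₁ h₅ _ heven x₃ (by simp))

lemma StrongConvex.mem_of_last_adj (hT : StrongConvex G T) (h : IsOddChordlessOn G v j n)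
    (hfinish : ∀ k, j ≤ k → k + 1 < n → ¬ G.Adj (v k) (v n)) (hn : v n ∈ T) (hx : x ∈ T)
    (hxj : G.Adj x (v j)) (hlast : ∀ k, j < k → k ≤ n → ¬ G.Adj x (v k)) (hne : x ≠ v (j + 1)) :
    ∀ k, j ≤ k → k ≤ n → v k ∈ T := by
  have hxv := h.toIsPathOn.ne_of_forall_not_adj hxj hne fun k hjk hkn => hlast k hjk hkn.le
  have heven : IsEvenChordedOn G (Function.update v (j - 1) x) (j - 1) n := by
    refine ⟨h.update hxv hxj fun k hjk hkn hk => (hlast k hjk hkn hk).elim, ?_, ?_⟩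
    · intro k hjk hkn hadj
      rw [Function.update_self, Function.update_of_ne (by lia)] at hadj
      exact hlast k (by lia) hkn hadj
    · intro k hjk hkn hadj
      rw [Function.update_of_ne (by lia : n ≠ j - 1)] at hadj
      obtain rfl | hjk := hjk.eq_or_lt
      · rw [Function.update_self] at hadj
        exact hlast n (by lia) le_rfl hadj
      · rw [Function.update_of_ne hjk.ne'] at hadj
        exact hfinish k (by lia) hkn hadj
  intro k hjk hkn
  have := strongConvex_iff.1 hT heven (by rwa [Function.update_self])
    (by rwa [Function.update_of_ne (by lia)]) k (by lia) hkn
  rwa [Function.update_of_ne (by lia)] at this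

lemma StronglyChordal.mem_closedNbhd_of_exit (hG : StronglyChordal G) (hT : StrongConvex G T)
    (h : IsOddChordlessOn G v s n) (hfinish : ∀ k, s ≤ k → k + 1 < n → ¬ G.Adj (v k) (v n))
    (hn : v n ∈ T) (hsm : s ≤ m) (hmn : m < n) (hm : v m ∉ T) (hm' : v (m + 1) ∈ T)
    (hx : x ∈ T) (hxs : G.Adj x (v s)) : x ∈ closedNbhd G (v (m + 1)) := by
  by_contra hx'
  obtain ⟨j, hsj, hjm, hj, hlast⟩ := exists_last_index (P := fun k => G.Adj x (v k)) hsm hxs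
  have hne : x ≠ v (j + 1) := by
    rintro rfl
    obtain rfl | rfl | hlt : j = m ∨ j + 1 = m ∨ j + 1 < m := by lia
    · exact hx' self_mem_closedNbhd
    · exact hm hx
    · exact hlast (j + 1 + 1) (by lia) (by lia) (h.adj (by lia) (by lia))
  have hsuffix := h.mono hsj le_rfl
  obtain ⟨i, hmi, hin, hi⟩ : ∃ i, m < i ∧ i ≤ n ∧ G.Adj x (v i) := by
    by_contra! hnone
    exact hm (hT.mem_of_last_adj hsuffix (fun k hk => hfinish k (by lia)) hn hx hj
      (fun k hjk hkn => (le_or_gt k m).elim (hlast k hjk) fun hmk => hnone k hmk hkn) hne m hjm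
      hmn.le)
  obtain ⟨l, hml, hli, hl, hfirst⟩ := exists_first_index (P := fun k => G.Adj x (v k)) hmi hi
  have hgap : ∀ k, j < k → k < l → ¬ G.Adj x (v k) := fun k hjk hkl =>
    (le_or_gt k m).elim (hlast k hjk) fun hmk => hfirst k hmk hkl
  have hl_ne : l ≠ m + 1 := by
    rintro rfl
    exact hx' (Or.inr hl.symm)
  have hlj := hG.le_add_two_of_forall_not_adj (h.mono hsj (hli.trans hin)) hj hl hne hgap
  obtain rfl : j = m := by lia
  exact hm (hT.mem_of_adj_adj hx hm' hj (h.adj hsm hmn) (by rwa [mem_closedNbhd_comm]))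

lemma StronglyChordal.closedNbhd_inter_subset_of_exit (hG : StronglyChordal G)
    (hT : StrongConvex G T) (h : IsOddChordlessOn G u a b)
    (hfinish : ∀ k, a ≤ k → k + 1 < b → ¬ G.Adj (u k) (u b)) (hq : q ∉ closedNbhd G (u b))
    (hne : ∀ k, a ≤ k → k ≤ b → q ≠ u k) (ha : G.Adj q (u a))
    (hparity : ∀ k, a < k → k ≤ b → G.Adj q (u k) → k % 2 ≠ a % 2) (hb : u b ∈ T)
    (ham : a ≤ m) (hmb : m < b) (hm : u m ∉ T) (hm' : u (m + 1) ∈ T) :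
    closedNbhd G q ∩ T ⊆ closedNbhd G (u (m + 1)) := by
  rintro y ⟨rfl | hqy, hy⟩
  · exact hG.mem_closedNbhd_of_exit hT h hfinish hb ham hmb hm hm' hy ha
  · have hoff : ∀ k, a ≤ k → Function.update u (a - 1) q k = u k := fun k hk =>
      Function.update_of_ne (by lia) _ _
    have := hG.mem_closedNbhd_of_exit (x := y) (m := m) hT (h.update hne ha hparity)
      (fun k hak hkb => ?_) (by rwa [hoff b (by lia)]) (by lia) hmb (by rwa [hoff m ham])
      (by rwa [hoff _ (by lia)]) hy (by rw [Function.update_self]; exact hqy.symm)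
    · rwa [hoff _ (by lia)] at this
    · rw [hoff b (by lia)]
      obtain rfl | hak := hak.eq_or_lt
      · rw [Function.update_self]
        exact fun hadj => hq (Or.inr hadj.symm)
      · rw [hoff k (by lia)]
        exact hfinish k (by lia) hkb

lemma StrongConvex.exists_adj_after (hT : StrongConvex G T) (h : IsEvenChordedOn G u a b)
    (hx : x ∈ T) (ha : G.Adj x (u a)) (hb : u b ∈ T) (hbx : u b ∉ closedNbhd G x) (ham : a ≤ m)
    (hmb : m ≤ b) (hm : u m ∉ T) : ∃ i, m < i ∧ i ≤ b ∧ G.Adj x (u i) := by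
  by_contra! hnone
  obtain ⟨j, haj, hjm, hj, hlast⟩ := exists_last_index (P := fun k => G.Adj x (u k)) ham ha
  have hlast' : ∀ k, j < k → k ≤ b → ¬ G.Adj x (u k) := fun k hjk hkb =>
    (le_or_gt k m).elim (hlast k hjk) fun hmk => hnone k hmk hkb
  have hne : x ≠ u (j + 1) := by
    rintro rfl
    obtain hlt | rfl | rfl : j + 1 < b ∨ j + 1 = b ∨ j = b := by lia
    · exact hlast' (j + 1 + 1) (by lia) (by lia) (h.adj (by lia) hlt)
    · exact hbx self_mem_closedNbhd
    · exact hbx (Or.inr hj)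
  exact hm (hT.mem_of_last_adj (h.toIsOddChordlessOn.mono haj le_rfl)
    (fun k hk => h.finish (haj.trans hk)) hb hx hj hlast' hne m hjm hmb)

/-- The vertices of `T` that have a neighbour outside `T`. -/
def innerBoundary (G : SimpleGraph V) (T : Set V) : Set V := {t ∈ T | ∃ y ∉ T, G.Adj t y}

lemma StronglyChordal.mem_union_closedNbhd (hG : StronglyChordal G) (hT : StrongConvex G T)
    (hq : MaximalFor (· ∈ innerBoundary G T) (fun t => closedNbhd G t ∩ T) q)
    (h : IsEvenChordedOn G u a b) (ha : G.Adj q (u a)) (hb : u b ∈ T)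
    (hbq : u b ∉ closedNbhd G q) (har : a ≤ r) (hrb : r ≤ b) : u r ∈ T ∪ closedNbhd G q := by
  by_contra hr
  rw [Set.mem_union, not_or] at hr
  obtain ⟨hrT, hrq⟩ := hr
  obtain ⟨m, hrm, hmb, hm, hlast⟩ := exists_last_index (P := fun k => u k ∉ T) hrb hrT
  have hmb : m < b := hmb.lt_of_ne (by rintro rfl; exact hm hb)
  have hm' : u (m + 1) ∈ T := not_not.1 (hlast (m + 1) (by lia) (by lia))
  obtain ⟨i, hmi, hib, hi⟩ :=
    hT.exists_adj_after h hq.1.1 ha hb hbq (har.trans hrm) hmb.le hm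
  obtain ⟨e, hae, her, he, hqu, hparity⟩ :=
    hG.exists_last_adj_of_parity h ha har (by lia) hib hrq hi
  have hinclusion : closedNbhd G q ∩ T ⊆ closedNbhd G (u (m + 1)) :=
    hG.closedNbhd_inter_subset_of_exit hT (h.toIsOddChordlessOn.mono hae le_rfl)
      (fun k hk => h.finish (hae.trans hk)) (by rwa [mem_closedNbhd_comm]) hqu he hparity hb
      (her.trans hrm) hmb hm hm'
  have hmem : u (m + 1) ∈ innerBoundary G T := ⟨hm', u m, hm, (h.adj (by lia) hmb).symm⟩
  have hmax : closedNbhd G (u (m + 1)) ∩ T ⊆ closedNbhd G q := fun y hy =>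
    (hq.2 hmem (Set.subset_inter hinclusion Set.inter_subset_right) hy).1
  have hadj₁ : G.Adj q (u (m + 1)) :=
    (hmax ⟨self_mem_closedNbhd, hm'⟩).resolve_left (hqu _ (by lia) (by lia)).symm
  have hlt : m + 1 < b := by
    by_contra! hle
    obtain rfl : b = m + 1 := by lia
    exact hbq (Or.inr hadj₁)
  have hadj₂ : G.Adj q (u (m + 1 + 1)) :=
    (hmax ⟨Or.inr (h.adj (by lia) hlt), not_not.1 (hlast _ (by lia) (by lia))⟩).resolve_left
      (hqu _ (by lia) (by lia)).symm
  have hp₁ := hparity _ (by lia) (by lia) hadj₁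
  have hp₂ := hparity _ (by lia) (by lia) hadj₂
  omega

lemma StronglyChordal.strongConvex_union_closedNbhd (hG : StronglyChordal G)
    (hT : StrongConvex G T)
    (hq : MaximalFor (· ∈ innerBoundary G T) (fun t => closedNbhd G t ∩ T) q) :
    StrongConvex G (T ∪ closedNbhd G q) := by
  have hqT : q ∈ T := hq.1.1
  refine strongConvex_iff.2 fun u a b h ha hb k hak hkb => ?_
  have hadj : ∀ k, u k ∉ T → u k ∈ T ∪ closedNbhd G q → G.Adj q (u k) := fun k hk hk' =>
    (hk'.resolve_left hk).resolve_left fun heq => hk (heq ▸ hqT)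
  by_cases hends : u a ∈ closedNbhd G q ∧ u b ∈ closedNbhd G q
  · exact Or.inr (strongConvex_iff.1 (hG.strongConvex_closedNbhd q) h hends.1 hends.2 k hak hkb)
  by_cases haT : u a ∈ T <;> by_cases hbT : u b ∈ T
  · exact Or.inl (strongConvex_iff.1 hT h haT hbT k hak hkb)
  · have hbq := hadj b hbT hb
    have := hG.mem_union_closedNbhd hT hq h.reverse (r := -k) (by rwa [neg_neg])
      (by rwa [neg_neg]) (by rw [neg_neg]; exact fun haq => hends ⟨haq, Or.inr hbq⟩) (by lia)
      (by lia)
    rwa [neg_neg] at this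
  · have haq := hadj a haT ha
    exact hG.mem_union_closedNbhd hT hq h haq hbT (fun hbq => hends ⟨Or.inr haq, hbq⟩) hak hkb
  · exact (hends ⟨ha.resolve_left haT, hb.resolve_left hbT⟩).elim

end ConvexSets

section SimpleVertices

variable {G : SimpleGraph V} {T : Set V} {u : ℤ → V} {a b k : ℤ} {q x : V}

lemma StrongConvex.closedNbhd_subset_of_union_eq_univ (hG : Chordal G) (hT : StrongConvex G T)
    (hq : MaximalFor (· ∈ innerBoundary G T) (fun t => closedNbhd G t ∩ T) q)
    (hcover : T ∪ closedNbhd G q = Set.univ) (hx : x ∉ T) {y : V} (hy : y ∈ closedNbhd G x) :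
    closedNbhd G y ⊆ closedNbhd G q := by
  have hqT : q ∈ T := hq.1.1
  have hadj : ∀ z, z ∉ T → G.Adj z q := fun z hz =>
    (((hcover.symm.subset trivial).resolve_left hz).resolve_left fun h => hz (h ▸ hqT)).symm
  intro z hz
  by_contra hzq
  have hzT : z ∈ T := not_not.1 fun h => hzq (Or.inr (hadj z h).symm)
  have hqz : q ∉ closedNbhd G z := by rwa [mem_closedNbhd_comm]
  have hyT : y ∈ T := by
    by_contra hyT
    have hyz : G.Adj y z := hz.resolve_left fun h => hyT (h ▸ hzT)
    exact hyT (hT.mem_of_adj_adj hzT hqT hyz.symm (hadj y hyT) hqz)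
  have hxy : G.Adj x y := hy.resolve_left fun h => hx (h ▸ hyT)
  have hqy : q ∈ closedNbhd G y :=
    not_not.1 fun h => hx (hT.mem_of_adj_adj hyT hqT hxy.symm (hadj x hx) h)
  have hyz : G.Adj y z := hz.resolve_left fun h => hqz (h ▸ hqy)
  obtain hsub | hsub := em (closedNbhd G q ∩ T ⊆ closedNbhd G y)
  · exact hzq (hq.2 (j := y) ⟨hyT, x, hx, hxy.symm⟩
      (Set.subset_inter hsub Set.inter_subset_right) ⟨hz, hzT⟩).1
  · obtain ⟨w, ⟨hwq, hwT⟩, hwy⟩ := Set.not_subset.1 hsub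
    exact hx (hT.mem_of_path_five hG hzT hyT hqT hwT hyz.symm hxy.symm (hadj x hx)
      (hwq.resolve_left fun h => hwy (h ▸ hqy)) hqz hwy)

lemma SimpleVtx.of_induce_compl_singleton {x : ({q}ᶜ : Set V)}
    (hx : SimpleVtx (G.induce {q}ᶜ) x)
    (hq : ∀ y ∈ closedNbhd G (x : V), closedNbhd G y ⊆ closedNbhd G q) : SimpleVtx G (x : V) := by
  have hmem : ∀ y ∈ closedNbhd G (x : V), q ∈ closedNbhd G y := fun y hy =>
    mem_closedNbhd_comm.1 (hq y hy self_mem_closedNbhd)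
  have hlift : ∀ {y z : ({q}ᶜ : Set V)}, (z : V) ∈ closedNbhd G (y : V) →
      z ∈ closedNbhd (G.induce {q}ᶜ) y := fun h => h.imp Subtype.ext id
  have hsub : ∀ {y z : ({q}ᶜ : Set V)}, q ∈ closedNbhd G (z : V) →
      closedNbhd (G.induce {q}ᶜ) y ⊆ closedNbhd (G.induce {q}ᶜ) z →
      closedNbhd G (y : V) ⊆ closedNbhd G (z : V) := by
    intro y z hz h t ht
    obtain rfl | htq := eq_or_ne t q
    · exact hz
    · exact (h (hlift (z := ⟨t, htq⟩) ht)).imp (congrArg Subtype.val) id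
  intro y hy z hz
  obtain rfl | hyq := eq_or_ne y q
  · exact Or.inr (hq z hz)
  obtain rfl | hzq := eq_or_ne z q
  · exact Or.inl (hq y hy)
  exact (hx ⟨y, hyq⟩ (hlift hy) ⟨z, hzq⟩ (hlift hz)).imp (hsub (hmem z hz)) (hsub (hmem y hy))

lemma StrongConvex.preimage_val (hT : StrongConvex G T) (S : Set V) :
    StrongConvex (G.induce S) ((↑) ⁻¹' T : Set S) :=
  strongConvex_iff.2 fun _ _ _ h => strongConvex_iff.1 hT
    { ne := fun _ _ hi hij hj => Subtype.val_injective.ne (h.ne hi hij hj)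
      adj := h.adj
      chord := h.chord
      start := h.start
      finish := h.finish }

lemma Chordal.induce (hG : Chordal G) (S : Set V) : Chordal (G.induce S) := by
  rintro ⟨x, w, ⟨hcycle, hinduced⟩, hlength⟩
  refine hG ⟨_, w.map (Embedding.induce S).toHom, ⟨hcycle.map Subtype.val_injective, ?_⟩, ?_⟩
  · simp only [Walk.support_map, List.mem_map]
    rintro _ ⟨y, hy, rfl⟩ _ ⟨z, hz, rfl⟩ hyz
    exact (hinduced y hy z hz hyz).imp (fun h => h.map _) (fun h => h.map _)
  · rwa [Walk.length_map]

lemma StronglyChordal.induce (hG : StronglyChordal G) (S : Set V) :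
    StronglyChordal (G.induce S) := by
  refine ⟨hG.1.induce S, fun x w hcycle heven hlength => ?_⟩
  obtain ⟨i, j, hi, hj, hij, hadj, hodd, hdist⟩ :=
    hG.2 _ (w.map (Embedding.induce S).toHom) (hcycle.map Subtype.val_injective)
      (by rwa [Walk.length_map]) (by rwa [Walk.length_map])
  simp only [List.get_eq_getElem, Walk.support_map, List.getElem_map, Walk.length_map,
    List.length_map] at hi hj hadj hodd hdist
  exact ⟨i, j, hi, hj, hij, hadj, hodd, hdist⟩

lemma IsPathOn.mem_of_innerBoundary_eq_empty (h : IsPathOn G u a b)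
    (hT : innerBoundary G T = ∅) (hak : a ≤ k) (hkb : k ≤ b) (ha : u a ∈ T) : u k ∈ T := by
  obtain ⟨m, ham, hmk, hm, hlast⟩ := exists_last_index (P := fun i => u i ∈ T) hak ha
  obtain rfl | hmk := hmk.eq_or_lt
  · exact hm
  · have hmem : u m ∈ innerBoundary G T :=
      ⟨hm, u (m + 1), hlast (m + 1) (by lia) (by lia), h.adj ham (by lia)⟩
    exact (hT.subset hmem).elim

lemma strongConvex_insert_of_innerBoundary_eq_empty (hT : innerBoundary G T = ∅) (x : V) :
    StrongConvex G (insert x T) := by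
  refine strongConvex_iff.2 fun u a b h ha hb k hak hkb => ?_
  obtain ha | ha := ha
  · obtain hb | hb := hb
    · obtain rfl | hab := (hak.trans hkb).eq_or_lt
      · obtain rfl : k = a := by lia
        exact Or.inl ha
      · exact (h.ne le_rfl hab le_rfl (ha.trans hb.symm)).elim
    · have := h.toIsPathOn.reverse.mem_of_innerBoundary_eq_empty (k := -k) hT (by lia) (by lia)
        (by rwa [neg_neg])
      rw [neg_neg] at this
      exact Or.inr this
  · exact Or.inr (h.toIsPathOn.mem_of_innerBoundary_eq_empty hT hak hkb ha)

lemma SimpleVtx.of_insert_eq_univ (hT : innerBoundary G T = ∅) (hx : x ∉ T)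
    (hcover : insert x T = Set.univ) : SimpleVtx G x := by
  have hisolated : ∀ y ∈ closedNbhd G x, y = x := fun y hy =>
    (hcover.symm.subset trivial : y ∈ insert x T).resolve_right fun hyT =>
      hT.subset ⟨hyT, x, hx, (hy.resolve_left fun h => hx (h ▸ hyT)).symm⟩
  intro y hy z hz
  rw [hisolated y hy, hisolated z hz]
  exact Or.inl Set.Subset.rfl

theorem StronglyChordal.exists_simpleVtx_notMem [Finite V] (hG : StronglyChordal G)
    (hT : StrongConvex G T) (hne : T ≠ Set.univ) : ∃ x ∉ T, SimpleVtx G x := by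
  induction hcard : Nat.card V using Nat.strong_induction_on generalizing V with
  | _ n ih =>
  obtain ⟨M, hTM, ⟨hM, hM_ne⟩, hmax⟩ :=
    Finite.exists_le_maximal (p := fun T => StrongConvex G T ∧ T ≠ Set.univ) ⟨hT, hne⟩
  have hcover : ∀ T', StrongConvex G T' → M ⊆ T' → ¬ T' ⊆ M → T' = Set.univ :=
    fun T' hT' hMT' hT'M => not_not.1 fun h => hT'M (hmax ⟨hT', h⟩ hMT')
  suffices ∃ x ∉ M, SimpleVtx G x from this.imp fun x hx => ⟨fun hxT => hx.1 (hTM hxT), hx.2⟩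
  obtain hboundary | hboundary := (innerBoundary G M).eq_empty_or_nonempty
  · obtain ⟨x, hx⟩ := (Set.ne_univ_iff_exists_notMem _).1 hM_ne
    exact ⟨x, hx, .of_insert_eq_univ hboundary hx
      (hcover _ (strongConvex_insert_of_innerBoundary_eq_empty hboundary x)
        (Set.subset_insert x M) fun h => hx (h (Set.mem_insert x M)))⟩
  · obtain ⟨q, hq⟩ := (Set.toFinite _).exists_maximalFor (fun t => closedNbhd G t ∩ M)
      (innerBoundary G M) hboundary
    obtain ⟨-, y, hyM, hqy⟩ := hq.1
    have hunion := hcover _ (hG.strongConvex_union_closedNbhd hM hq) Set.subset_union_left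
      fun h => hyM (h (Or.inr (Or.inr hqy)))
    obtain ⟨x, hxM, hx⟩ := ih _ (hcard ▸ Finite.card_subtype_lt (x := q) (by simp))
      (hG.induce {q}ᶜ) (hM.preimage_val _)
      ((Set.ne_univ_iff_exists_notMem _).2 ⟨⟨y, hqy.ne'⟩, hyM⟩) rfl
    exact ⟨x, hxM, hx.of_induce_compl_singleton fun z hz =>
      hM.closedNbhd_subset_of_union_eq_univ hG.1 hq hunion hxM hz⟩

end SimpleVertices

section Geometry

variable {G : SimpleGraph V} {S : Set V} {u : ℤ → V} {a b k : ℤ}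

lemma IsEvenChordedOn.exists_notMem_closedNbhd (h : IsEvenChordedOn G u a b) (hak : a < k)
    (hkb : k < b) :
    ∃ i, a ≤ i ∧ i ≤ b ∧ u i ∈ closedNbhd G (u (k - 1)) ∧ u i ∉ closedNbhd G (u (k + 1)) := by
  refine ⟨max a (k - 2), by lia, by lia, h.toIsPathOn.mem_closedNbhd (by lia) (by lia) (by lia)
    (by lia) (by lia) (by lia), ?_⟩
  rintro (heq | hadj)
  · exact h.ne (by lia) (by lia) (by lia) heq
  · obtain hk | hk := le_total (k - 2) a
    · rw [max_eq_left hk] at hadj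
      exact h.start (by lia) (by lia) hadj.symm
    · rw [max_eq_right hk] at hadj
      have := h.chord hk (by lia) (by lia) hadj.symm
      lia

lemma StrongConvex.diff_singleton {x : S} (hS : StrongConvex G S)
    (hx : SimpleVtx (G.induce S) x) : StrongConvex G (S \ {(x : V)}) := by
  refine strongConvex_iff.2 fun u a b h ha hb k hak hkb => ?_
  have hmem := strongConvex_iff.1 hS h ha.1 hb.1
  refine ⟨hmem k hak hkb, fun hkx : u k = x => ?_⟩
  have hak : a < k := hak.lt_of_ne (by rintro rfl; exact ha.2 hkx)
  have hkb : k < b := hkb.lt_of_ne (by rintro rfl; exact hb.2 hkx)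
  have hmono : ∀ {y z t : S}, closedNbhd (G.induce S) y ⊆ closedNbhd (G.induce S) z →
      (t : V) ∈ closedNbhd G (y : V) → (t : V) ∈ closedNbhd G (z : V) :=
    fun hsub ht => (hsub (ht.imp Subtype.ext id)).imp (congrArg Subtype.val) id
  have hnbhd : ∀ {i} (hi : u i ∈ S), u i ∈ closedNbhd G (u k) →
      ⟨u i, hi⟩ ∈ closedNbhd (G.induce S) x := fun _ hik =>
    (hkx ▸ hik).imp Subtype.ext id
  obtain hsub | hsub := hx
    ⟨u (k - 1), hmem _ (by lia) (by lia)⟩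
    (hnbhd _ (h.toIsPathOn.mem_closedNbhd (by lia) (by lia) hak.le hkb.le (by lia) (by lia)))
    ⟨u (k + 1), hmem _ (by lia) (by lia)⟩
    (hnbhd _ (h.toIsPathOn.mem_closedNbhd (by lia) (by lia) hak.le hkb.le (by lia) (by lia)))
  · obtain ⟨i, hai, hib, hi, hi'⟩ := h.exists_notMem_closedNbhd hak hkb
    exact hi' (hmono (t := ⟨u i, hmem i hai hib⟩) hsub hi)
  · obtain ⟨i, hai, hib, hi, hi'⟩ := h.reverse.exists_notMem_closedNbhd (k := -k) (by lia) (by lia)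
    rw [neg_sub, sub_neg_eq_add, add_comm] at hi
    rw [neg_add, neg_neg, ← sub_eq_add_neg] at hi'
    exact hi' (hmono (t := ⟨u (-i), hmem (-i) (by lia) (by lia)⟩) hsub hi)

lemma subset_chull {Cvx : Set V → Prop} : S ⊆ chull Cvx S :=
  Set.subset_sInter fun _ h => h.1

lemma chull_subset {Cvx : Set V → Prop} {T : Set V} (hST : S ⊆ T) (hT : Cvx T) :
    chull Cvx S ⊆ T :=
  Set.sInter_subset_of_mem ⟨hST, hT⟩

lemma pConvex_chull (P : ∀ ⦃x y : V⦄, G.Walk x y → Prop) (S : Set V) :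
    PConvex G P (chull (PConvex G P) S) :=
  fun _ _ hx hy w hw z hz T hT => hT.2 (hx T hT) (hy T hT) w hw z hz

theorem StronglyChordal.isConvexGeometry [Finite V] (hG : StronglyChordal G) :
    IsConvexGeometry (StrongConvex G) := by
  intro S hS
  have hhull : chull (StrongConvex G) (extremeSet (StrongConvex G) S) ⊆ S :=
    chull_subset (fun x hx => hx.1) hS
  refine Set.Subset.antisymm (fun y hy => ?_) hhull
  by_contra hyT
  obtain ⟨x, hxT, hx⟩ := (hG.induce S).exists_simpleVtx_notMem
    (StrongConvex.preimage_val (pConvex_chull _ _) S)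
    ((Set.ne_univ_iff_exists_notMem _).2 ⟨⟨y, hy⟩, hyT⟩)
  exact hxT (subset_chull ⟨x.2, hS.diff_singleton hx⟩)

lemma IsConvexGeometry.exists_notMem_chull {P : ∀ ⦃x y : V⦄, G.Walk x y → Prop}
    (hgeom : IsConvexGeometry (PConvex G P)) {C : Set V} (hC : C.Nonempty) :
    ∃ x ∈ C, x ∉ chull (PConvex G P) (C \ {x}) := by
  have hhull := pConvex_chull P C
  have hempty : PConvex G P ∅ := fun _ _ hx => hx.elim
  obtain ⟨x, hx, hx'⟩ : (extremeSet (PConvex G P) (chull (PConvex G P) C)).Nonempty := by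
    by_contra hnone
    rw [Set.not_nonempty_iff_eq_empty] at hnone
    obtain ⟨x, hx⟩ := hC
    have hx' := subset_chull (Cvx := PConvex G P) hx
    rw [hgeom _ hhull, hnone] at hx'
    exact chull_subset Set.Subset.rfl hempty hx'
  refine ⟨x, ?_, fun hmem => ?_⟩
  · by_contra hxC
    exact (chull_subset (Set.subset_sdiff_singleton subset_chull hxC) hx' hx).2 rfl
  · exact (chull_subset (Set.sdiff_subset_sdiff_left subset_chull) hx' hmem).2 rfl

end Geometry

section CyclicSequences

variable {G : SimpleGraph V} {x : V} {w : G.Walk x x} {i j k : ℤ}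

/-- The vertices of a closed walk as a periodic sequence indexed by the integers, so that
windows of consecutive vertices may straddle the base point. The value is only meaningful for
walks of positive length. -/
def cycleSeq (w : G.Walk x x) (k : ℤ) : V := w.getVert (k % w.length).toNat

lemma cycleSeq_eq_getVert {n : ℕ} (hn : n ≤ w.length) : cycleSeq w n = w.getVert n := by
  obtain hn | rfl := hn.lt_or_eq
  · rw [cycleSeq, Int.emod_eq_of_lt (by lia) (by lia), Int.toNat_natCast]
  · rw [cycleSeq, Int.emod_self, Int.toNat_zero, Walk.getVert_zero, Walk.getVert_length]

lemma cycleSeq_congr (h : (w.length : ℤ) ∣ j - i) : cycleSeq w i = cycleSeq w j := by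
  rw [cycleSeq, cycleSeq, (Int.modEq_of_dvd h).eq]

lemma exists_cycleSeq_shift (hw : 0 < w.length) (k : ℤ) :
    ∃ n < w.length, ∀ i, cycleSeq w (k + i) = cycleSeq w (n + i) := by
  have hnonneg := Int.emod_nonneg k (b := w.length) (by lia)
  have hlt := Int.emod_lt_of_pos k (b := w.length) (by lia)
  refine ⟨(k % w.length).toNat, by lia, fun i => cycleSeq_congr ?_⟩
  rw [Int.toNat_of_nonneg hnonneg, add_sub_add_right_eq_sub, dvd_sub_comm]
  exact Int.dvd_self_sub_emod

lemma cycleSeq_adj (hw : 0 < w.length) (k : ℤ) : G.Adj (cycleSeq w k) (cycleSeq w (k + 1)) := by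
  obtain ⟨n, hn, hshift⟩ := exists_cycleSeq_shift hw k
  have hshift₀ := hshift 0
  rw [add_zero, add_zero] at hshift₀
  rw [hshift₀, hshift 1, ← Nat.cast_succ, cycleSeq_eq_getVert hn.le, cycleSeq_eq_getVert hn]
  exact w.adj_getVert_succ hn

lemma dvd_sub_of_cycleSeq_eq (hw : w.IsCycle) (h : cycleSeq w i = cycleSeq w j) :
    (w.length : ℤ) ∣ j - i := by
  have hlength := hw.three_le_length
  have hi := Int.emod_lt_of_pos i (b := w.length) (by lia)
  have hj := Int.emod_lt_of_pos j (b := w.length) (by lia)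
  have hi' := Int.emod_nonneg i (b := w.length) (by lia)
  have hj' := Int.emod_nonneg j (b := w.length) (by lia)
  have heq := hw.getVert_injOn' (by rw [Set.mem_ofPred_eq]; lia)
    (by rw [Set.mem_ofPred_eq]; lia) h
  have hmod : i % w.length = j % w.length := by lia
  exact Int.ModEq.dvd hmod

lemma cycleSeq_ne (hw : w.IsCycle) (hij : i < j) (hji : j < i + w.length) :
    cycleSeq w i ≠ cycleSeq w j := fun h => by
  have := Int.le_of_dvd (by lia) (dvd_sub_of_cycleSeq_eq hw h)
  lia

lemma IsInducedCycleW.not_adj_cycleSeq (hw : IsInducedCycleW G w) (hlength : 4 ≤ w.length)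
    (k : ℤ) : ¬ G.Adj (cycleSeq w k) (cycleSeq w (k + 2)) := by
  intro hadj
  have hmem := hw.2 _ (w.getVert_mem_support _) _ (w.getVert_mem_support _) hadj
  rw [consecIn, Walk.infix_support_iff_mem_edges, Walk.mk_mem_edges_iff_exists] at hmem
  obtain ⟨n, hn, heq⟩ := hmem
  rw [← cycleSeq_eq_getVert hn.le, ← cycleSeq_eq_getVert hn, Nat.cast_succ, Sym2.eq_iff] at heq
  obtain ⟨h₁, h₂⟩ | ⟨h₁, h₂⟩ := heq
  · have hdvd := dvd_sub (dvd_sub_of_cycleSeq_eq hw.1 h₂) (dvd_sub_of_cycleSeq_eq hw.1 h₁)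
    have := Int.le_of_dvd (by lia) hdvd
    lia
  · have hdvd := dvd_sub (dvd_sub_of_cycleSeq_eq hw.1 h₁) (dvd_sub_of_cycleSeq_eq hw.1 h₂)
    have := Int.le_of_dvd (by lia) hdvd
    lia

lemma hasOddChord_of_adj_cycleSeq (hlength : 6 ≤ w.length)
    (hadj : G.Adj (cycleSeq w k) (cycleSeq w (k + 3))) : HasOddChord G w := by
  have hchord : ∀ i j : ℕ, i < j → j ≤ w.length → G.Adj (w.getVert i) (w.getVert j) →
      min (j - i) (w.length - (j - i)) = 3 → HasOddChord G w := by
    intro i j hij hj hadj_ij hdist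
    refine ⟨i, j, by rw [Walk.length_support]; lia, by rw [Walk.length_support]; lia, hij, ?_, ?_⟩
    · simpa only [List.get_eq_getElem, Walk.support_getElem_eq_getVert] using hadj_ij
    · rw [hdist]
      decide
  obtain ⟨n, hn, hshift⟩ := exists_cycleSeq_shift (w := w) (by lia) k
  have hshift₀ := hshift 0
  rw [add_zero, add_zero] at hshift₀
  rw [hshift₀, hshift 3, cycleSeq_eq_getVert hn.le] at hadj
  obtain hle | hlt := le_or_gt (n + 3) w.length
  · rw [show (n + 3 : ℤ) = (n + 3 : ℕ) by lia, cycleSeq_eq_getVert hle] at hadj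
    exact hchord n (n + 3) (by lia) hle hadj (by lia)
  · rw [cycleSeq_congr (j := (n + 3 - w.length : ℕ)) ⟨-1, by lia⟩,
      cycleSeq_eq_getVert (by lia)] at hadj
    exact hchord (n + 3 - w.length) n (by lia) hn.le hadj.symm (by lia)

lemma IsConvexGeometry.exists_cycleSeq_notMem (hgeom : IsConvexGeometry (StrongConvex G))
    (hw : w.IsCycle) : ∃ T k, StrongConvex G T ∧ cycleSeq w k ∉ T ∧
      ∀ i, i ≠ k → k - w.length < i → i < k + w.length → cycleSeq w i ∈ T := by
  obtain ⟨_, ⟨k, rfl⟩, hk⟩ := hgeom.exists_notMem_chull (Set.range_nonempty (cycleSeq w))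
  refine ⟨_, k, pConvex_chull _ _, hk, fun i hik hki hik' => subset_chull ⟨⟨i, rfl⟩, ?_⟩⟩
  obtain hlt | hlt := hik.lt_or_gt
  · exact cycleSeq_ne hw hlt (by lia)
  · exact (cycleSeq_ne hw hlt hik').symm

theorem IsConvexGeometry.chordal (hgeom : IsConvexGeometry (StrongConvex G)) : Chordal G := by
  rintro ⟨x, w, hw, hlength⟩
  obtain ⟨T, k, hT, hk, hmem⟩ := hgeom.exists_cycleSeq_notMem hw.1
  have hadj := cycleSeq_adj (w := w) (by lia)
  have hadj₁ := hadj (k - 1)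
  have hnot_adj := hw.not_adj_cycleSeq hlength (k - 1)
  rw [sub_add_cancel] at hadj₁
  rw [show k - 1 + 2 = k + 1 by lia] at hnot_adj
  refine hk (hT.mem_of_adj_adj (hmem (k - 1) (by lia) (by lia) (by lia))
    (hmem (k + 1) (by lia) (by lia) (by lia)) hadj₁ (hadj k) ?_)
  rintro (heq | h)
  · exact cycleSeq_ne hw.1 (by lia) (by lia) heq.symm
  · exact hnot_adj h

theorem IsConvexGeometry.hasOddChord (hgeom : IsConvexGeometry (StrongConvex G))
    (hw : w.IsCycle) (hlength : 6 ≤ w.length) : HasOddChord G w := by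
  by_contra hno
  obtain ⟨T, k, hT, hk, hmem⟩ := hgeom.exists_cycleSeq_notMem hw
  have hnot : ∀ i, cycleSeq w (i + 3) ∉ closedNbhd G (cycleSeq w i) := by
    rintro i (heq | hadj)
    · exact cycleSeq_ne hw (by lia) (by lia) heq.symm
    · exact hno (hasOddChord_of_adj_cycleSeq hlength hadj)
  have hadj := cycleSeq_adj (w := w) (by lia)
  obtain ⟨m, rfl⟩ : ∃ m, k = m + 1 + 1 := ⟨k - 2, by lia⟩
  exact hk (hT.mem_of_path_five hgeom.chordal
    (hmem m (by lia) (by lia) (by lia)) (hmem (m + 1) (by lia) (by lia) (by lia))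
    (hmem (m + 3) (by lia) (by lia) (by lia)) (hmem (m + 1 + 3) (by lia) (by lia) (by lia))
    (hadj m) (hadj (m + 1)) (by simpa [add_assoc] using hadj (m + 1 + 1))
    (by simpa [add_assoc] using hadj (m + 3)) (hnot m) (hnot (m + 1)))

end CyclicSequences

theorem strong_convex_geometry_iff_strongly_chordal_general [Finite V] (G : SimpleGraph V) :
    IsConvexGeometry (StrongConvex G) ↔ StronglyChordal G :=
  ⟨fun h => ⟨h.chordal, fun _ _ hw _ hlength => h.hasOddChord hw hlength⟩,
    fun h => h.isConvexGeometry⟩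

/-- A finite connected simple graph `G` is a convex geometry with respect to
the strong convexity if and only if `G` is strongly chordal. -/
theorem strong_convex_geometry_iff_strongly_chordal
    {V : Type*} [Fintype V] (G : SimpleGraph V) (hconn : G.Connected) :
    IsConvexGeometry (PConvex G (fun _ _ w => IsEvenChorded G w)) ↔ StronglyChordal G :=
  strong_convex_geometry_iff_strongly_chordal_general G
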